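/- arXiv:1707.03287 — 2 statements merged into one kernel-verified Lean document; each statement's English description precedes it below -/
import Mathlib

section
/- Let I ⊆ ℝ be an open interval, let q : ℝ → ℝ be continuous on I, and let α : ℝ → ℝ be three times continuously differentiable on I with α'(t) ≠ 0 for all t ∈ I, such that α' satisfies Kummer's equation q(t) − (α'(t))² − (1/2)·α'''(t)/α'(t) + (3/4)·(α''(t)/α'(t))² = 0 for all t ∈ I. Define u(t) = cos(α(t))/√|α'(t)| and v(t) = sin(α(t))/√|α'(t)|. Then for every twice differentiable function y : ℝ → ℝ satisfying y''(t) + q(t)·y(t) = 0 for all t ∈ I, there exist real constants a and b such that y(t) = a·u(t) + b·v(t) for all t ∈ I. -/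
/-- The Wronskian of two solutions of `y'' + q·y = 0` is constant on an open interval. -/
theorem wronskian_eq_of_solutions {a b : ℝ} {q f f' g g' : ℝ → ℝ}
    (hf : ∀ t ∈ Set.Ioo a b, HasDerivAt f (f' t) t)
    (hf' : ∀ t ∈ Set.Ioo a b, HasDerivAt f' (-(q t * f t)) t)
    (hg : ∀ t ∈ Set.Ioo a b, HasDerivAt g (g' t) t)
    (hg' : ∀ t ∈ Set.Ioo a b, HasDerivAt g' (-(q t * g t)) t)
    {s t : ℝ} (hs : s ∈ Set.Ioo a b) (ht : t ∈ Set.Ioo a b) :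
    f t * g' t - f' t * g t = f s * g' s - f' s * g s := by
  have key : ∀ x ∈ Set.Ioo a b, HasDerivAt (fun x => f x * g' x - f' x * g x) 0 x := by
    intro x hx
    refine (((hf x hx).mul (hg' x hx)).sub ((hf' x hx).mul (hg x hx))).congr_deriv ?_
    ring
  exact isOpen_Ioo.is_const_of_deriv_eq_zero isPreconnected_Ioo
    (fun x hx => (key x hx).differentiableAt.differentiableWithinAt)
    (fun x hx => (key x hx).deriv) ht hs

theorem HasDerivAt.inv_sqrt_abs {p : ℝ → ℝ} {p' t : ℝ} (hp : HasDerivAt p p' t)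
    (h0 : p t ≠ 0) :
    HasDerivAt (fun x => (√|p x|)⁻¹) (-(p' / (2 * p t)) * (√|p t|)⁻¹) t := by
  have hpos : 0 < |p t| := abs_pos.mpr h0
  have hsq : √|p t| ^ 2 = |p t| := Real.sq_sqrt hpos.le
  have hs : √|p t| ≠ 0 := (Real.sqrt_pos.mpr hpos).ne'
  refine ((((hasDerivAt_abs h0).comp t hp).sqrt hpos.ne').inv hs).congr_deriv ?_
  simp only [Function.comp_apply]
  rcases lt_or_gt_of_ne h0 with h | h
  · rw [abs_of_neg h] at *
    simp only [sign_neg h, SignType.coe_neg_one]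
    rw [hsq]
    field_simp
  · rw [abs_of_pos h] at *
    simp only [sign_pos h, SignType.coe_one]
    rw [hsq]
    field_simp

/-- If `α'` satisfies Kummer's equation for `y'' + q·y = 0` on the open interval
`(a,b)`, then every twice differentiable solution of `y'' + q·y = 0` on `(a,b)`
is a linear combination of `u(t) = cos(α(t))/√|α'(t)|` and
`v(t) = sin(α(t))/√|α'(t)|`. -/
theorem phase_spans_solutions (a b : ℝ) (q α u v : ℝ → ℝ)
    (hq : ContinuousOn q (Set.Ioo a b))
    (hα : ContDiffOn ℝ 3 α (Set.Ioo a b))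
    (hα' : ∀ t ∈ Set.Ioo a b, deriv α t ≠ 0)
    (hkummer : ∀ t ∈ Set.Ioo a b,
      q t - (deriv α t) ^ 2
        - (1 / 2) * (deriv (deriv (deriv α)) t / deriv α t)
        + (3 / 4) * (deriv (deriv α) t / deriv α t) ^ 2 = 0)
    (hu : ∀ t, u t = Real.cos (α t) / Real.sqrt |deriv α t|)
    (hv : ∀ t, v t = Real.sin (α t) / Real.sqrt |deriv α t|) :
    ∀ y : ℝ → ℝ,
      (∀ t ∈ Set.Ioo a b, DifferentiableAt ℝ y t) →
      (∀ t ∈ Set.Ioo a b, DifferentiableAt ℝ (deriv y) t) →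
      (∀ t ∈ Set.Ioo a b, deriv (deriv y) t + q t * y t = 0) →
      ∃ c d : ℝ, ∀ t ∈ Set.Ioo a b, y t = c * u t + d * v t := by
  intro y hy hy' hode
  rcases (Set.Ioo a b).eq_empty_or_nonempty with hempty | ⟨s, hs⟩
  · exact ⟨0, 0, by simp [hempty]⟩
  have hd1 : ContDiffOn ℝ 2 (deriv α) (Set.Ioo a b) :=
    hα.deriv_of_isOpen isOpen_Ioo (by norm_num)
  have hd2 : ContDiffOn ℝ 1 (deriv (deriv α)) (Set.Ioo a b) :=
    hd1.deriv_of_isOpen isOpen_Ioo (by norm_num)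
  have hasDeriv {f : ℝ → ℝ} {n : WithTop ℕ∞} (hn : n ≠ 0) (hf : ContDiffOn ℝ n f (Set.Ioo a b))
      (t : ℝ) (ht : t ∈ Set.Ioo a b) : HasDerivAt f (deriv f t) t :=
    ((hf.differentiableOn hn).differentiableAt (isOpen_Ioo.mem_nhds ht)).hasDerivAt
  have hα0 := hasDeriv (by norm_num) hα
  have hα1 := hasDeriv (by norm_num) hd1
  have hα2 := hasDeriv (by norm_num) hd2
  set k : ℝ → ℝ := fun t => deriv (deriv α) t / (2 * deriv α t) with hk
  set u' : ℝ → ℝ := fun t => -k t * u t - deriv α t * v t with hu'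
  set v' : ℝ → ℝ := fun t => -k t * v t + deriv α t * u t with hv'
  have hud : ∀ t ∈ Set.Ioo a b, HasDerivAt u (u' t) t := by
    intro t ht
    have h := (hα0 t ht).cos.mul ((hα1 t ht).inv_sqrt_abs (hα' t ht))
    rw [show u = fun x => Real.cos (α x) * (√|deriv α x|)⁻¹ from
      funext fun x => by rw [hu, div_eq_mul_inv]]
    refine h.congr_deriv ?_
    simp only [hu', hu, hv, hk]
    ring
  have hvd : ∀ t ∈ Set.Ioo a b, HasDerivAt v (v' t) t := by
    intro t ht
    have h := (hα0 t ht).sin.mul ((hα1 t ht).inv_sqrt_abs (hα' t ht))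
    rw [show v = fun x => Real.sin (α x) * (√|deriv α x|)⁻¹ from
      funext fun x => by rw [hv, div_eq_mul_inv]]
    refine h.congr_deriv ?_
    simp only [hv', hu, hv, hk]
    ring
  have hkd : ∀ t ∈ Set.Ioo a b,
      HasDerivAt k (q t - deriv α t ^ 2 + k t ^ 2) t := by
    intro t ht
    have h0 := hα' t ht
    refine ((hα2 t ht).div ((hα1 t ht).const_mul 2) (by simpa using h0)).congr_deriv ?_
    rw [show q t = (deriv α t) ^ 2 + (1 / 2) * (deriv (deriv (deriv α)) t / deriv α t)
      - (3 / 4) * (deriv (deriv α) t / deriv α t) ^ 2 by linarith [hkummer t ht]]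
    simp only [hk]
    field_simp
    ring
  have hpk : ∀ t ∈ Set.Ioo a b, deriv (deriv α) t = 2 * k t * deriv α t := by
    intro t ht
    have h0 := hα' t ht
    simp only [hk]
    field_simp
  have hud' : ∀ t ∈ Set.Ioo a b, HasDerivAt u' (-(q t * u t)) t := by
    intro t ht
    refine (((hkd t ht).neg.mul (hud t ht)).sub ((hα1 t ht).mul (hvd t ht))).congr_deriv ?_
    rw [hpk t ht]
    simp only [hu', hv', Pi.neg_apply]
    ring
  have hvd' : ∀ t ∈ Set.Ioo a b, HasDerivAt v' (-(q t * v t)) t := by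
    intro t ht
    refine (((hkd t ht).neg.mul (hvd t ht)).add ((hα1 t ht).mul (hud t ht))).congr_deriv ?_
    rw [hpk t ht]
    simp only [hu', hv', Pi.neg_apply]
    ring
  have hyd : ∀ t ∈ Set.Ioo a b, HasDerivAt y (deriv y t) t := fun t ht => (hy t ht).hasDerivAt
  have hyd' : ∀ t ∈ Set.Ioo a b, HasDerivAt (deriv y) (-(q t * y t)) t := fun t ht =>
    (hy' t ht).hasDerivAt.congr_deriv (by linarith [hode t ht])
  have hW : u s * v' s - u' s * v s ≠ 0 := by
    have h0 := hα' s hs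
    have hr : √|deriv α s| ≠ 0 := (Real.sqrt_pos.mpr (abs_pos.mpr h0)).ne'
    have : u s * v' s - u' s * v s = deriv α s / √|deriv α s| ^ 2 := by
      have := Real.sin_sq_add_cos_sq (α s)
      calc u s * v' s - u' s * v s = deriv α s * (u s ^ 2 + v s ^ 2) := by
            simp only [hu', hv']; ring
        _ = deriv α s * (Real.sin (α s) ^ 2 + Real.cos (α s) ^ 2) / √|deriv α s| ^ 2 := by
            rw [hu, hv]; ring
        _ = _ := by rw [this, mul_one]
    rw [this]
    positivity
  refine ⟨(y s * v' s - deriv y s * v s) / (u s * v' s - u' s * v s),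
    (u s * deriv y s - u' s * y s) / (u s * v' s - u' s * v s), fun t ht => ?_⟩
  have h1 := wronskian_eq_of_solutions hud hud' hvd hvd' hs ht
  rw [← h1] at hW ⊢
  rw [← wronskian_eq_of_solutions hyd hyd' hvd hvd' hs ht,
    ← wronskian_eq_of_solutions hud hud' hyd hyd' hs ht,
    div_mul_eq_mul_div, div_mul_eq_mul_div, ← add_div, eq_div_iff hW]
  ring
end

section
/- Let n ≥ 1 be an integer. There exists a constant C > 0, depending only on n, with the following property: for every continuous function f : [−1,1]³ → ℝ, if a_{i,j,k} = (8/π³) ∫_{−1}^{1}∫_{−1}^{1}∫_{−1}^{1} f(x,y,z)·T_i(x)·T_j(y)·T_k(z) · (1−x²)^{−1/2}(1−y²)^{−1/2}(1−z²)^{−1/2} dx dy dz for 0 ≤ i,j,k ≤ n, and b_{i,j,k} = (8/n³) · Σ''_{r=0}^{n} Σ''_{s=0}^{n} Σ''_{t=0}^{n} T_i(ρ_{r,n})·T_j(ρ_{s,n})·T_k(ρ_{t,n})·f(ρ_{r,n}, ρ_{s,n}, ρ_{t,n}), then sup over (x,y,z) ∈ [−1,1]³ of |f(x,y,z) − Σ''_{i=0}^{n}Σ''_{j=0}^{n}Σ''_{k=0}^{n}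 b_{i,j,k} T_i(x)T_j(y)T_k(z)| is at most C times the sup over (x,y,z) ∈ [−1,1]³ of |f(x,y,z) − Σ''_{i=0}^{n}Σ''_{j=0}^{n}Σ''_{k=0}^{n} a_{i,j,k} T_i(x)T_j(y)T_k(z)|. -/
/-- The `l`-th node of the `(n+1)`-point Chebyshev grid on `[-1,1]`. -/
noncomputable def chebNode (n l : ℕ) : ℝ := -Real.cos (Real.pi * l / n)

/-- The weight halving the first and last terms of a `Σ''` sum. -/
noncomputable def chebWeight (n l : ℕ) : ℝ := if l = 0 ∨ l = n then 1 / 2 else 1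

open Polynomial Finset

lemma chebNode_mem_Icc (n l : ℕ) : chebNode n l ∈ Set.Icc (-1 : ℝ) 1 := by
  unfold chebNode
  constructor <;> linarith [Real.neg_one_le_cos (Real.pi * l / n), Real.cos_le_one (Real.pi * l / n)]

lemma eval_T_chebNode (n l m : ℕ) :
    (Chebyshev.T ℝ (m : ℤ)).eval (chebNode n l) =
      (-1) ^ m * Real.cos (l * (m * Real.pi / n)) := by
  have h : chebNode n l = Real.cos (Real.pi - Real.pi * l / n) := by
    rw [Real.cos_pi_sub, chebNode]
  rw [h, Chebyshev.T_real_cos, mul_sub, Int.cast_natCast, Real.cos_sub, Real.cos_nat_mul_pi,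
    Real.sin_nat_mul_pi, zero_mul, add_zero]
  ring_nf

lemma abs_chebWeight_le_one (n l : ℕ) : |chebWeight n l| ≤ 1 := by
  unfold chebWeight
  split_ifs <;> norm_num [abs_of_pos]

lemma sum_chebWeight_mul {n : ℕ} (hn : 1 ≤ n) (f : ℕ → ℝ) :
    ∑ r ∈ range (n + 1), chebWeight n r * f r =
      ∑ r ∈ range n, (f r + f (r + 1)) / 2 := by
  obtain ⟨m, rfl⟩ : ∃ m, n = m + 1 := ⟨n - 1, by omega⟩
  have hmid : ∀ r ∈ range m, chebWeight (m + 1) (r + 1) * f (r + 1) = f (r + 1) := by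
    intro r hr
    have : ¬ (r + 1 = 0 ∨ r + 1 = m + 1) := by
      have := mem_range.1 hr
      omega
    rw [chebWeight, if_neg this, one_mul]
  rw [sum_range_succ, sum_range_succ', sum_congr rfl hmid, ← sum_div, sum_add_distrib,
    sum_range_succ' f, sum_range_succ (fun r => f (r + 1))]
  simp only [chebWeight, true_or, or_true, if_true]
  ring

/-- The trapezoidal sum of `cos (r θ)` in closed form. -/
lemma two_mul_sin_half_mul_sum_cos {n : ℕ} (hn : 1 ≤ n) (θ : ℝ) :
    2 * Real.sin (θ / 2) * ∑ r ∈ range (n + 1), chebWeight n r * Real.cos (r * θ) =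
      Real.sin (n * θ) * Real.cos (θ / 2) := by
  rw [sum_chebWeight_mul hn]
  clear hn
  induction n with
  | zero => simp
  | succ n ih =>
    rw [sum_range_succ, mul_add, ih]
    obtain ⟨φ, rfl⟩ : ∃ φ, θ = 2 * φ := ⟨θ / 2, by ring⟩
    have h : ((n + 1 : ℕ) : ℝ) * (2 * φ) = n * (2 * φ) + 2 * φ := by push_cast; ring
    rw [h, Real.sin_add, Real.cos_add, Real.cos_two_mul, Real.sin_two_mul,
      mul_div_cancel_left₀ _ (two_ne_zero' ℝ)]
    have := Real.sin_sq_add_cos_sq φ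
    generalize Real.sin φ = s at *
    generalize Real.cos φ = c at *
    generalize Real.sin _ = a
    generalize Real.cos _ = b
    linear_combination (-2 * a * c) * this

/-- The trapezoidal sum of `cos (r p π / n)` vanishes for `0 < p < 2 n`. -/
lemma sum_cos_eq_zero {n : ℕ} (hn : 1 ≤ n) {p : ℤ} (hp : 0 < p) (hpn : p < 2 * n) :
    ∑ r ∈ range (n + 1), chebWeight n r * Real.cos (r * (p * Real.pi / n)) = 0 := by
  have hn' : (0 : ℝ) < n := by exact_mod_cast hn
  have h := two_mul_sin_half_mul_sum_cos hn (p * Real.pi / n)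
  have hp' : (0 : ℝ) < p := by exact_mod_cast hp
  have hpn' : (p : ℝ) < 2 * n := by exact_mod_cast hpn
  have hs : 0 < Real.sin (p * Real.pi / n / 2) := by
    apply Real.sin_pos_of_pos_of_lt_pi
    · have := Real.pi_pos
      positivity
    · rw [div_div, div_lt_iff₀ (by positivity)]
      nlinarith [Real.pi_pos]
  rw [mul_div_cancel₀ _ hn'.ne', Real.sin_int_mul_pi, zero_mul] at h
  exact (mul_eq_zero.1 h).resolve_left (by positivity)

lemma sum_chebWeight {n : ℕ} (hn : 1 ≤ n) : ∑ r ∈ range (n + 1), chebWeight n r = n := by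
  simpa using sum_chebWeight_mul hn (fun _ => 1)

/-- Discrete orthogonality of the Chebyshev polynomials on the Chebyshev grid. -/
lemma chebyshev_discrete_orthogonality {n i m : ℕ} (hn : 1 ≤ n) (hi : i ≤ n) (hm : m ≤ n) :
    ∑ r ∈ range (n + 1), chebWeight n r * ((Chebyshev.T ℝ (i : ℤ)).eval (chebNode n r) *
      (Chebyshev.T ℝ (m : ℤ)).eval (chebNode n r)) =
      if i = m then n / (2 * chebWeight n m) else 0 := by
  have hn' : (n : ℝ) ≠ 0 := by positivity
  have key : ∀ i m : ℕ,
      ∑ r ∈ range (n + 1), chebWeight n r * ((Chebyshev.T ℝ (i : ℤ)).eval (chebNode n r) *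
        (Chebyshev.T ℝ (m : ℤ)).eval (chebNode n r)) =
      (-1) ^ (i + m) / 2 *
        (∑ r ∈ range (n + 1), chebWeight n r *
            Real.cos (r * (((i + m : ℤ) : ℝ) * Real.pi / n)) +
          ∑ r ∈ range (n + 1), chebWeight n r *
            Real.cos (r * (((i - m : ℤ) : ℝ) * Real.pi / n))) := by
    intro i m
    rw [← sum_add_distrib, mul_sum]
    refine sum_congr rfl fun r _ => ?_
    rw [eval_T_chebNode, eval_T_chebNode]
    have h1 : (r : ℝ) * (((i + m : ℤ) : ℝ) * Real.pi / n) =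
        r * (i * Real.pi / n) + r * (m * Real.pi / n) := by push_cast; ring
    have h2 : (r : ℝ) * (((i - m : ℤ) : ℝ) * Real.pi / n) =
        r * (i * Real.pi / n) - r * (m * Real.pi / n) := by push_cast; ring
    rw [h1, h2, Real.cos_add, Real.cos_sub]
    ring
  have off : ∀ i m : ℕ, i ≤ n → m < i →
      ∑ r ∈ range (n + 1), chebWeight n r * ((Chebyshev.T ℝ (i : ℤ)).eval (chebNode n r) *
        (Chebyshev.T ℝ (m : ℤ)).eval (chebNode n r)) = 0 := by
    intro i m hi hmi
    rw [key, sum_cos_eq_zero hn (by omega) (by omega), sum_cos_eq_zero hn (by omega) (by omega)]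
    simp
  rcases lt_trichotomy i m with h | rfl | h
  · rw [if_neg h.ne, ← off m i hm h]
    exact sum_congr rfl fun r _ => by ring
  · rw [if_pos rfl, key, ← two_mul i, pow_mul]
    simp only [sub_self, Int.cast_zero, zero_mul, zero_div, mul_zero, Real.cos_zero, mul_one,
      sum_chebWeight hn]
    by_cases h0 : i = 0
    · subst h0
      have hw : chebWeight n 0 = 1 / 2 := if_pos (Or.inl rfl)
      simp [hw, sum_chebWeight hn]
      ring
    · by_cases h1 : i = n
      · subst h1
        have hcos : ∀ r : ℕ, Real.cos (r * (((i + i : ℤ) : ℝ) * Real.pi / i)) = 1 := by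
          intro r
          rw [← Real.cos_nat_mul_two_pi r]
          congr 1
          push_cast
          field_simp
          ring
        have hw : chebWeight i i = 1 / 2 := if_pos (Or.inr rfl)
        simp only [hcos, mul_one, sum_chebWeight hn, hw]
        norm_num
        ring
      · rw [sum_cos_eq_zero hn (by omega) (by omega)]
        simp [chebWeight, h0, h1]
        ring
  · rw [if_neg h.ne', off i m hi h]

/-- The cardinal functions of Chebyshev interpolation, as Chebyshev sums. -/
noncomputable def chebCardinal (n : ℕ) (x : ℝ) (r : ℕ) : ℝ :=
  ∑ i ∈ range (n + 1), 2 / n * (chebWeight n i * chebWeight n r) *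
    ((Chebyshev.T ℝ (i : ℤ)).eval (chebNode n r) * (Chebyshev.T ℝ (i : ℤ)).eval x)

lemma sum_chebCardinal_mul_eval_T {n m : ℕ} (hn : 1 ≤ n) (hm : m ≤ n) (x : ℝ) :
    ∑ r ∈ range (n + 1), chebCardinal n x r * (Chebyshev.T ℝ (m : ℤ)).eval (chebNode n r) =
      (Chebyshev.T ℝ (m : ℤ)).eval x := by
  have hn' : (n : ℝ) ≠ 0 := by positivity
  have hw : chebWeight n m ≠ 0 := by
    unfold chebWeight
    split_ifs <;> norm_num
  simp only [chebCardinal, sum_mul]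
  rw [sum_comm]
  have h : ∀ i ∈ range (n + 1),
      ∑ r ∈ range (n + 1), 2 / n * (chebWeight n i * chebWeight n r) *
        ((Chebyshev.T ℝ (i : ℤ)).eval (chebNode n r) * (Chebyshev.T ℝ (i : ℤ)).eval x) *
          (Chebyshev.T ℝ (m : ℤ)).eval (chebNode n r) =
      if i = m then (Chebyshev.T ℝ (m : ℤ)).eval x else 0 := by
    intro i hi
    have ho := chebyshev_discrete_orthogonality hn (Nat.lt_succ_iff.1 (mem_range.1 hi)) hm
    calc _ = 2 / n * chebWeight n i * (Chebyshev.T ℝ (i : ℤ)).eval x *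
          ∑ r ∈ range (n + 1), chebWeight n r * ((Chebyshev.T ℝ (i : ℤ)).eval (chebNode n r) *
            (Chebyshev.T ℝ (m : ℤ)).eval (chebNode n r)) := by
          rw [mul_sum]
          exact sum_congr rfl fun r _ => by ring
      _ = _ := by
          rw [ho]
          split_ifs with him
          · subst him
            field_simp
          · simp
  rw [sum_congr rfl h, sum_ite_eq' _ _ _, if_pos (mem_range.2 (by omega))]

lemma abs_chebCardinal_le (n r : ℕ) {x : ℝ} (hx : x ∈ Set.Icc (-1 : ℝ) 1) :
    |chebCardinal n x r| ≤ (n + 1) * (2 / n) := by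
  have hT : ∀ (i : ℕ) {y : ℝ}, y ∈ Set.Icc (-1 : ℝ) 1 →
      |(Chebyshev.T ℝ (i : ℤ)).eval y| ≤ 1 := fun i y hy =>
    Chebyshev.abs_eval_T_real_le_one _ (abs_le.2 hy)
  refine (abs_sum_le_sum_abs _ _).trans ?_
  refine (sum_le_card_nsmul _ _ (2 / n : ℝ) fun i _ => ?_).trans_eq (by simp)
  have h2 : (0 : ℝ) ≤ 2 / n := by positivity
  rw [abs_mul, abs_mul, abs_mul, abs_mul, abs_of_nonneg h2]
  have h3 := mul_le_one₀ (abs_chebWeight_le_one n i) (abs_nonneg _) (abs_chebWeight_le_one n r)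
  have h4 := mul_le_one₀ (hT i (chebNode_mem_Icc n r)) (abs_nonneg _) (hT i hx)
  rw [mul_assoc]
  exact mul_le_of_le_one_right h2 (mul_le_one₀ h3 (by positivity) h4)

lemma sum_tensor_mul_sum (s : Finset ℕ) (φ ψ χ : ℕ → ℕ → ℝ) (F : ℕ → ℕ → ℕ → ℝ) :
    ∑ i ∈ s, ∑ j ∈ s, ∑ k ∈ s, ∑ r ∈ s, ∑ t ∈ s, ∑ u ∈ s,
        φ i r * ψ j t * χ k u * F r t u =
      ∑ r ∈ s, ∑ t ∈ s, ∑ u ∈ s,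
        (∑ i ∈ s, φ i r) * (∑ j ∈ s, ψ j t) * (∑ k ∈ s, χ k u) * F r t u := by
  have h : ∀ G : ℕ → ℕ → ℕ → ℝ, ∑ i ∈ s, ∑ j ∈ s, ∑ k ∈ s, G i j k =
      ∑ p ∈ s ×ˢ s ×ˢ s, G p.1 p.2.1 p.2.2 := by
    intro G
    simp only [sum_product]
  simp only [h]
  rw [sum_comm]
  refine sum_congr rfl fun q _ => ?_
  simp only [sum_product, ← mul_sum, ← sum_mul]

/-- The trivariate Chebyshev sum of the discrete coefficients, in terms of cardinal functions. -/
lemma sum_chebCardinal_mul_eq (n : ℕ) (F : ℕ → ℕ → ℕ → ℝ) (x y z : ℝ) :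
    ∑ i ∈ range (n + 1), ∑ j ∈ range (n + 1), ∑ k ∈ range (n + 1),
      chebWeight n i * chebWeight n j * chebWeight n k *
        (8 / (n : ℝ) ^ 3 * ∑ r ∈ range (n + 1), ∑ s ∈ range (n + 1), ∑ t ∈ range (n + 1),
          chebWeight n r * chebWeight n s * chebWeight n t *
            ((Chebyshev.T ℝ (i : ℤ)).eval (chebNode n r) *
              (Chebyshev.T ℝ (j : ℤ)).eval (chebNode n s) *
              (Chebyshev.T ℝ (k : ℤ)).eval (chebNode n t)) * F r s t) *
        ((Chebyshev.T ℝ (i : ℤ)).eval x * (Chebyshev.T ℝ (j : ℤ)).eval y *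
          (Chebyshev.T ℝ (k : ℤ)).eval z) =
      ∑ r ∈ range (n + 1), ∑ s ∈ range (n + 1), ∑ t ∈ range (n + 1),
        chebCardinal n x r * chebCardinal n y s * chebCardinal n z t * F r s t := by
  simp only [chebCardinal]
  rw [← sum_tensor_mul_sum]
  simp only [mul_sum, sum_mul]
  refine sum_congr rfl fun i _ => sum_congr rfl fun j _ => sum_congr rfl fun k _ =>
    sum_congr rfl fun r _ => sum_congr rfl fun s _ => sum_congr rfl fun t _ => ?_
  ring

/-- Trivariate Chebyshev interpolation reproduces polynomials of degree at most `n` in each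
variable. -/
lemma sum_chebCardinal_mul_chebyshev_sum {n : ℕ} (hn : 1 ≤ n) (c : ℕ → ℕ → ℕ → ℝ) (x y z : ℝ) :
    ∑ r ∈ range (n + 1), ∑ s ∈ range (n + 1), ∑ t ∈ range (n + 1),
      chebCardinal n x r * chebCardinal n y s * chebCardinal n z t *
        ∑ i ∈ range (n + 1), ∑ j ∈ range (n + 1), ∑ k ∈ range (n + 1), c i j k *
          ((Chebyshev.T ℝ (i : ℤ)).eval (chebNode n r) *
            (Chebyshev.T ℝ (j : ℤ)).eval (chebNode n s) *
            (Chebyshev.T ℝ (k : ℤ)).eval (chebNode n t)) =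
      ∑ i ∈ range (n + 1), ∑ j ∈ range (n + 1), ∑ k ∈ range (n + 1), c i j k *
        ((Chebyshev.T ℝ (i : ℤ)).eval x * (Chebyshev.T ℝ (j : ℤ)).eval y *
          (Chebyshev.T ℝ (k : ℤ)).eval z) := by
  have h := sum_tensor_mul_sum (range (n + 1))
    (fun r i => chebCardinal n x r * (Chebyshev.T ℝ (i : ℤ)).eval (chebNode n r))
    (fun s j => chebCardinal n y s * (Chebyshev.T ℝ (j : ℤ)).eval (chebNode n s))
    (fun t k => chebCardinal n z t * (Chebyshev.T ℝ (k : ℤ)).eval (chebNode n t)) c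
  have hle : ∀ {i}, i ∈ range (n + 1) → i ≤ n := fun hi => Nat.lt_succ_iff.1 (mem_range.1 hi)
  calc _ = _ := by
        simp only [mul_sum]
        refine sum_congr rfl fun i _ => sum_congr rfl fun j _ => sum_congr rfl fun k _ =>
          sum_congr rfl fun r _ => sum_congr rfl fun s _ => sum_congr rfl fun t _ => ?_
        ring
    _ = _ := h
    _ = _ := by
        refine sum_congr rfl fun i hi => sum_congr rfl fun j hj => sum_congr rfl fun k hk => ?_
        rw [sum_chebCardinal_mul_eval_T hn (hle hi), sum_chebCardinal_mul_eval_T hn (hle hj),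
          sum_chebCardinal_mul_eval_T hn (hle hk), mul_comm]

lemma abs_sum_tensor_mul_le (s : Finset ℕ) {u v w : ℕ → ℝ} {F : ℕ → ℕ → ℕ → ℝ} {K M : ℝ}
    (hK : 0 ≤ K) (hu : ∀ r, |u r| ≤ K) (hv : ∀ r, |v r| ≤ K) (hw : ∀ r, |w r| ≤ K)
    (hF : ∀ i j k, |F i j k| ≤ M) :
    |∑ i ∈ s, ∑ j ∈ s, ∑ k ∈ s, u i * v j * w k * F i j k| ≤ (#s * K) ^ 3 * M := by
  have hsum : ∀ {f : ℕ → ℝ} {c : ℝ}, (∀ i, |f i| ≤ c) → |∑ i ∈ s, f i| ≤ #s * c := by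
    intro f c hf
    refine (abs_sum_le_sum_abs _ _).trans ?_
    simpa using sum_le_card_nsmul s _ c fun i _ => hf i
  have h : ∀ i j k, |u i * v j * w k * F i j k| ≤ K * K * K * M := by
    intro i j k
    rw [abs_mul, abs_mul, abs_mul]
    gcongr
    exacts [hu i, hv j, hw k, hF i j k]
  refine (hsum fun i => hsum fun j => hsum fun k => h i j k).trans_eq ?_
  ring

/-- The error of the `n`-th order trivariate Chebyshev interpolant, whose
coefficients `b` come from the values of `f` on the tensor product Chebyshev
grid, is controlled (uniformly on `[-1,1]³`, up to a constant depending only on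
`n`) by the error of the truncated trivariate Chebyshev series of `f`, whose
coefficients `a` are given by the weighted integrals of `f` against products of
Chebyshev polynomials. -/
theorem trivariate_chebyshev_interpolation_near_best (n : ℕ) (hn : 1 ≤ n) :
    ∃ C : ℝ, 0 < C ∧
      ∀ f : ℝ → ℝ → ℝ → ℝ,
        ContinuousOn (fun p : ℝ × ℝ × ℝ => f p.1 p.2.1 p.2.2)
          (Set.Icc (-1 : ℝ) 1 ×ˢ Set.Icc (-1 : ℝ) 1 ×ˢ Set.Icc (-1 : ℝ) 1) →
        ∀ A B : ℕ → ℕ → ℕ → ℝ,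
        (∀ i j k, A i j k = 8 / Real.pi ^ 3 *
          ∫ x in Set.Icc (-1 : ℝ) 1, ∫ y in Set.Icc (-1 : ℝ) 1,
            ∫ z in Set.Icc (-1 : ℝ) 1,
              f x y z * ((Polynomial.Chebyshev.T ℝ (i : ℤ)).eval x *
                  (Polynomial.Chebyshev.T ℝ (j : ℤ)).eval y *
                  (Polynomial.Chebyshev.T ℝ (k : ℤ)).eval z) /
                (Real.sqrt (1 - x ^ 2) * Real.sqrt (1 - y ^ 2) *
                  Real.sqrt (1 - z ^ 2))) →
        (∀ i j k, B i j k = 8 / (n : ℝ) ^ 3 *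
          ∑ r ∈ Finset.range (n + 1), ∑ s ∈ Finset.range (n + 1),
            ∑ t ∈ Finset.range (n + 1),
              chebWeight n r * chebWeight n s * chebWeight n t *
                ((Polynomial.Chebyshev.T ℝ (i : ℤ)).eval (chebNode n r) *
                  (Polynomial.Chebyshev.T ℝ (j : ℤ)).eval (chebNode n s) *
                  (Polynomial.Chebyshev.T ℝ (k : ℤ)).eval (chebNode n t)) *
                f (chebNode n r) (chebNode n s) (chebNode n t)) →
        ∀ M : ℝ,
          (∀ x ∈ Set.Icc (-1 : ℝ) 1, ∀ y ∈ Set.Icc (-1 : ℝ) 1,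
            ∀ z ∈ Set.Icc (-1 : ℝ) 1,
            |f x y z -
              ∑ i ∈ Finset.range (n + 1), ∑ j ∈ Finset.range (n + 1),
                ∑ k ∈ Finset.range (n + 1),
                  chebWeight n i * chebWeight n j * chebWeight n k *
                    A i j k *
                    ((Polynomial.Chebyshev.T ℝ (i : ℤ)).eval x *
                      (Polynomial.Chebyshev.T ℝ (j : ℤ)).eval y *
                      (Polynomial.Chebyshev.T ℝ (k : ℤ)).eval z)| ≤ M) →
          (∀ x ∈ Set.Icc (-1 : ℝ) 1, ∀ y ∈ Set.Icc (-1 : ℝ) 1,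
            ∀ z ∈ Set.Icc (-1 : ℝ) 1,
            |f x y z -
              ∑ i ∈ Finset.range (n + 1), ∑ j ∈ Finset.range (n + 1),
                ∑ k ∈ Finset.range (n + 1),
                  chebWeight n i * chebWeight n j * chebWeight n k *
                    B i j k *
                    ((Polynomial.Chebyshev.T ℝ (i : ℤ)).eval x *
                      (Polynomial.Chebyshev.T ℝ (j : ℤ)).eval y *
                      (Polynomial.Chebyshev.T ℝ (k : ℤ)).eval z)| ≤ C * M) := by
  have hK : (0 : ℝ) ≤ (n + 1) * (2 / n) := by positivity
  refine ⟨1 + ((n + 1) * ((n + 1) * (2 / n))) ^ 3, by positivity, ?_⟩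
  intro f _ A B _ hB M hM x hx y hy z hz
  simp only [hB]
  rw [sum_chebCardinal_mul_eq n fun r s t => f (chebNode n r) (chebNode n s) (chebNode n t)]
  have hrep := sum_chebCardinal_mul_chebyshev_sum hn
    (fun i j k => chebWeight n i * chebWeight n j * chebWeight n k * A i j k) x y z
  have hbound := abs_sum_tensor_mul_le (range (n + 1)) hK
    (fun r => abs_chebCardinal_le n r hx) (fun r => abs_chebCardinal_le n r hy)
    (fun r => abs_chebCardinal_le n r hz)
    (fun r s t => hM _ (chebNode_mem_Icc n r) _ (chebNode_mem_Icc n s) _ (chebNode_mem_Icc n t))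
  have hxyz := hM x hx y hy z hz
  simp only [mul_sub, sum_sub_distrib] at hbound
  rw [hrep, card_range, Nat.cast_add, Nat.cast_one] at hbound
  rw [one_add_mul]
  refine le_trans ?_ (add_le_add hxyz hbound)
  refine le_trans (le_of_eq ?_) (abs_sub _ _)
  congr 1
  ring
end
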